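/- Let A ∈ ℝ^{m×n}, y ∈ ℝ^m, let x* ∈ ℝⁿ be k-sparse and set η = y − Ax*. Let q ≥ 2k be a positive integer, set t = ⌈q/k⌉ and φ = ((√5+1)/2)(t+1), and let δ₁ ≤ δ₂ ≤ δ₃ be restricted isometry constants of orders k, 2k, 3k for A. Suppose δ₃ < 2/(√(φ² + 6φ + 1) + φ + 1). Let (x^p) be a PGOT sequence for (A, y, k, q). Then ρ := ((√5+1)/2)(t+1)δ₃√((1+δ₁)/(1−δ₂)) < 1 and for every p ≥ 0: ‖x^{p+1} − x*‖₂ ≤ ρ^p‖x^0 − x*‖₂ + (τ/(1−ρ))‖η‖₂, where τ = [(√5+1)(t+1)(1+δ₂) + 4]/(2√(1−δ₂)). -/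

import Mathlib

/-!
Write `v = xs - x p`, let `S` be a `k`-set containing the support of `xs`, and let `r = Aᵀ (y - A (x p))
= Aᵀ (A v + η)` be the residual gradient. Two facts give the contraction `stmt5` iterates.

* By the restricted isometry property (polarised in `ric_bilin`), `r` is close to `v` on every small
  set `W`: `‖(r - v)_W‖ ≤ δ₃ ‖v‖ + √(1 + δ₂) ‖η‖` (`grad_bound`).
* Since `q ≥ 2k ≥ |supp v|`, the entries of `r` on `S` discarded by the thresholding are dominated by
  entries retained at places where `v` vanishes (`ht_dominates`), so they are bounded by the same
  quantity. Therefore `‖(v - h)_S‖ ≤ 2 (δ₃ ‖v‖ + √(1 + δ₂) ‖η‖)` (`thresh_bound`).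

Optimality of `w` against the indicator of `S`, together with the restricted isometry inequalities of
orders `k` and `2k`, turns this into a bound on `‖x (p + 1) - xs‖` with factor
`2 δ₃ √((1 + δ₁) / (1 - δ₂))`. As `t ≥ 2`, the constant `2` is below `φ = (√5 + 1)/2 * (t + 1)`.
Finally the threshold on `δ₃` is the positive root of `φ δ² + (φ + 1) δ = 1`, that is, of
`φ δ (1 + δ) = 1 - δ`, which makes `ρ < 1`.
-/

open Matrix Finset Filter

/-- Euclidean (ℓ₂) norm of a vector. -/
noncomputable def nrm {n : ℕ} (x : Fin n → ℝ) : ℝ := Real.sqrt (∑ i, x i ^ 2)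

/-- A vector is `s`-sparse if it has at most `s` nonzero entries. -/
def sparse {n : ℕ} (s : ℕ) (x : Fin n → ℝ) : Prop :=
  ((Finset.univ : Finset (Fin n)).filter fun i => x i ≠ 0).card ≤ s

/-- Support of a vector, as a finset. -/
noncomputable def suppF {n : ℕ} (x : Fin n → ℝ) : Finset (Fin n) :=
  (Finset.univ : Finset (Fin n)).filter fun i => x i ≠ 0

/-- Restriction of a vector to an index set (zero outside). -/
def restr {n : ℕ} (x : Fin n → ℝ) (Ω : Finset (Fin n)) : Fin n → ℝ :=
  fun i => if i ∈ Ω then x i else 0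

/-- `δ ∈ [0,1)` is a restricted isometry constant of order `s` for `A`. -/
def RIC {m n : ℕ} (A : Matrix (Fin m) (Fin n) ℝ) (s : ℕ) (δ : ℝ) : Prop :=
  0 ≤ δ ∧ δ < 1 ∧ ∀ x : Fin n → ℝ, sparse s x →
    (1 - δ) * nrm x ^ 2 ≤ nrm (A.mulVec x) ^ 2 ∧
      nrm (A.mulVec x) ^ 2 ≤ (1 + δ) * nrm x ^ 2

/-- `h` is a hard thresholding of `z` at level `q` with support `Ω`. -/
def IsHT {n : ℕ} (q : ℕ) (z h : Fin n → ℝ) (Ω : Finset (Fin n)) : Prop :=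
  Ω.card = q ∧ (∀ i ∈ Ω, h i = z i) ∧ (∀ i ∉ Ω, h i = 0) ∧
    ∀ i ∈ Ω, ∀ j ∉ Ω, |z j| ≤ |z i|

/-- A PGOT iterate sequence for `(A, y, k, q)`. -/
def IsPGOTSeq {m n : ℕ} (A : Matrix (Fin m) (Fin n) ℝ) (y : Fin m → ℝ) (k q : ℕ)
    (x : ℕ → Fin n → ℝ) : Prop :=
  x 0 = 0 ∧ ∀ p : ℕ, ∃ (h : Fin n → ℝ) (Ω : Finset (Fin n)) (w : Fin n → ℝ),
    IsHT q (Aᵀ.mulVec (y - A.mulVec (x p))) h Ω ∧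
    (∀ i, w i = 0 ∨ w i = 1) ∧ (∑ i, w i) = (k : ℝ) ∧
    (∀ w' : Fin n → ℝ, (∀ i, w' i = 0 ∨ w' i = 1) → (∑ i, w' i) = (k : ℝ) →
      nrm (y - A.mulVec (fun i => (x p i + h i) * w i)) ^ 2 ≤
        nrm (y - A.mulVec (fun i => (x p i + h i) * w' i)) ^ 2) ∧
    x (p + 1) = fun i => (x p i + h i) * w i

/-- `nrm` is the norm of `EuclideanSpace`. -/
lemma nrm_eq {n : ℕ} (x : Fin n → ℝ) : nrm x = ‖(WithLp.toLp 2 x : EuclideanSpace ℝ (Fin n))‖ := by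
  rw [EuclideanSpace.norm_eq, nrm]
  simp

lemma nrm_nonneg {n : ℕ} (x : Fin n → ℝ) : 0 ≤ nrm x := Real.sqrt_nonneg _

lemma nrm_sq {n : ℕ} (x : Fin n → ℝ) : nrm x ^ 2 = x ⬝ᵥ x := by
  rw [nrm, Real.sq_sqrt (Finset.sum_nonneg fun i _ => sq_nonneg _)]
  simp [dotProduct, sq]

lemma nrm_add_le {n : ℕ} (x z : Fin n → ℝ) : nrm (x + z) ≤ nrm x + nrm z := by
  simp only [nrm_eq, WithLp.toLp_add]
  exact norm_add_le _ _

lemma nrm_sub_le {n : ℕ} (x z : Fin n → ℝ) : nrm (x - z) ≤ nrm x + nrm z := by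
  simp only [nrm_eq, WithLp.toLp_sub]
  exact norm_sub_le _ _

lemma nrm_sub_comm {n : ℕ} (x z : Fin n → ℝ) : nrm (x - z) = nrm (z - x) := by
  simp only [nrm_eq, WithLp.toLp_sub]
  exact norm_sub_rev _ _

lemma dot_le {n : ℕ} (x z : Fin n → ℝ) : x ⬝ᵥ z ≤ nrm x * nrm z := by
  have := real_inner_le_norm (WithLp.toLp 2 x : EuclideanSpace ℝ (Fin n)) (WithLp.toLp 2 z)
  rw [← nrm_eq, ← nrm_eq, EuclideanSpace.inner_eq_star_dotProduct] at this
  simpa [dotProduct_comm] using this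

lemma nrm_eq_zero {n : ℕ} {x : Fin n → ℝ} (h : nrm x = 0) : x = 0 := by
  rw [nrm_eq, norm_eq_zero] at h
  simpa using h

lemma sparse_of_subset {n s : ℕ} {x : Fin n → ℝ} {W : Finset (Fin n)}
    (h : ∀ i ∉ W, x i = 0) (hW : W.card ≤ s) : sparse s x := by
  refine le_trans (Finset.card_le_card fun i hi => ?_) hW
  by_contra hn
  exact (Finset.mem_filter.1 hi).2 (h i hn)

lemma notMem_suppF {n : ℕ} {x : Fin n → ℝ} {i : Fin n} (h : i ∉ suppF x) : x i = 0 := by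
  by_contra hn
  exact h (by simp [suppF, hn])

/-- The form `⟨A g, A v⟩ - ⟨g, v⟩` is bounded by `δ ‖g‖ ‖v‖` for `g`, `v` jointly supported on a set
of size at most `s`. -/
lemma ric_bilin {m n s : ℕ} {A : Matrix (Fin m) (Fin n) ℝ} {δ : ℝ} (h : RIC A s δ)
    {V : Finset (Fin n)} (hV : V.card ≤ s) {g v : Fin n → ℝ}
    (hg : ∀ i ∉ V, g i = 0) (hv : ∀ i ∉ V, v i = 0) :
    A.mulVec g ⬝ᵥ A.mulVec v - g ⬝ᵥ v ≤ δ * nrm g * nrm v := by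
  obtain ⟨_, _, h⟩ := h
  rcases (nrm_nonneg g).eq_or_lt with ha | ha
  · rw [nrm_eq_zero ha.symm]; simp [nrm]
  rcases (nrm_nonneg v).eq_or_lt with hb | hb
  · rw [nrm_eq_zero hb.symm]; simp [nrm]
  -- Polarise after rescaling so that both vectors have norm `‖g‖ * ‖v‖`.
  have hp := (h (nrm v • g + nrm g • v)
    (sparse_of_subset (fun i hi => by simp [hg i hi, hv i hi]) hV)).2
  have hm := (h (nrm v • g - nrm g • v)
    (sparse_of_subset (fun i hi => by simp [hg i hi, hv i hi]) hV)).1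
  have eg := nrm_sq g
  have ev := nrm_sq v
  simp only [nrm_sq, mulVec_add, mulVec_sub, mulVec_smul, dotProduct_add, add_dotProduct,
    dotProduct_sub, sub_dotProduct, dotProduct_smul, smul_dotProduct, smul_eq_mul] at hp hm
  rw [dotProduct_comm v g, dotProduct_comm (A.mulVec v) (A.mulVec g), ← eg, ← ev] at hp hm
  have hab := mul_pos ha hb
  refine le_of_mul_le_mul_left ?_ hab
  nlinarith

/-- On a small set `W` the gradient `Aᵀ (A v + η)` approximates `v`. -/
lemma grad_bound {m n s s' : ℕ} {A : Matrix (Fin m) (Fin n) ℝ} {δ δ' : ℝ} (h : RIC A s δ)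
    (h' : RIC A s' δ') {v : Fin n → ℝ} {η : Fin m → ℝ} {V W : Finset (Fin n)}
    (hv : ∀ i ∉ V, v i = 0) (hVW : (W ∪ V).card ≤ s) (hW : W.card ≤ s') :
    nrm (restr (Aᵀ.mulVec (A.mulVec v + η) - v) W) ≤ δ * nrm v + Real.sqrt (1 + δ') * nrm η := by
  set z := Aᵀ.mulVec (A.mulVec v + η) - v with hz
  set g := restr z W with hgd
  have hgW : ∀ i ∉ W, g i = 0 := fun i hi => by simp [hgd, restr, hi]
  have e1 : nrm g ^ 2 = g ⬝ᵥ z := by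
    rw [nrm_sq]
    refine Finset.sum_congr rfl fun i _ => ?_
    by_cases hi : i ∈ W <;> simp [hgd, restr, hi]
  have e2 : g ⬝ᵥ z = (A.mulVec g ⬝ᵥ A.mulVec v - g ⬝ᵥ v) + A.mulVec g ⬝ᵥ η := by
    rw [hz, dotProduct_sub, dotProduct_mulVec, vecMul_transpose, dotProduct_add]
    ring
  have b1 := ric_bilin h hVW (g := g) (v := v)
    (fun i hi => hgW i fun hh => hi (Finset.mem_union_left _ hh))
    (fun i hi => hv i fun hh => hi (Finset.mem_union_right _ hh))
  have b2 : nrm (A.mulVec g) ≤ Real.sqrt (1 + δ') * nrm g := by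
    have := (h'.2.2 g (sparse_of_subset hgW hW)).2
    have h0 := h'.1
    refine abs_le_of_sq_le_sq' ?_ (mul_nonneg (Real.sqrt_nonneg _) (nrm_nonneg _)) |>.2
    rw [mul_pow, Real.sq_sqrt (by linarith)]
    exact this
  have b3 := (dot_le (A.mulVec g) η).trans (mul_le_mul_of_nonneg_right b2 (nrm_nonneg η))
  rcases (nrm_nonneg g).eq_or_lt with ha | ha
  · rw [← ha]
    have := h.1
    have := nrm_nonneg v
    have := nrm_nonneg η
    positivity
  · refine le_of_mul_le_mul_left ?_ ha
    nlinarith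

/-- Entries on `S` lost by thresholding at level `q ≥ |V|`, `S ⊆ V`, are dominated in norm by
retained entries outside `V`. -/
lemma ht_dominates {n q : ℕ} {r h : Fin n → ℝ} {Ω S V : Finset (Fin n)} (hh : IsHT q r h Ω)
    (hV : V.card ≤ q) (hS : S ⊆ V) :
    ∃ W : Finset (Fin n), Disjoint W V ∧ W.card ≤ S.card ∧
      nrm (restr r (S \ Ω)) ≤ nrm (restr r W) := by
  obtain ⟨hΩ, _, _, hmax⟩ := hh
  have c1 : (S \ Ω).card ≤ (Ω \ V).card :=
    (Finset.card_le_card (Finset.sdiff_subset_sdiff hS le_rfl)).trans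
      (Finset.card_sdiff_le_card_sdiff_iff.2 (hV.trans hΩ.ge))
  obtain ⟨W, hW, hWc⟩ := Finset.exists_subset_card_eq c1
  refine ⟨W, Finset.disjoint_left.2 fun i hi => (Finset.mem_sdiff.1 (hW hi)).2,
    hWc.trans_le (Finset.card_le_card Finset.sdiff_subset), Real.sqrt_le_sqrt ?_⟩
  have key : ∀ U : Finset (Fin n), ∑ i, restr r U i ^ 2 = ∑ i ∈ U, r i ^ 2 := fun U => by
    simp [restr, ite_pow, Finset.sum_ite_mem]
  rw [key, key]
  rcases W.eq_empty_or_nonempty with h0 | hne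
  · have : S \ Ω = ∅ := by rw [← Finset.card_eq_zero, ← hWc, h0, Finset.card_empty]
    rw [this, h0]
  · obtain ⟨c, hc, hcm⟩ := W.exists_min_image (fun i => r i ^ 2) hne
    refine (Finset.sum_le_card_nsmul _ _ (r c ^ 2) fun j hj => ?_).trans
      (hWc ▸ Finset.card_nsmul_le_sum W _ _ hcm)
    exact sq_le_sq.2 (hmax c (Finset.mem_sdiff.1 (hW hc)).1 j (Finset.mem_sdiff.1 hj).2)

/-- On a `k`-set `S` the thresholded gradient `h` approximates `v`, with the error of `grad_bound`
doubled. -/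
lemma thresh_bound {m n k q : ℕ} (hq : 2 * k ≤ q) {A : Matrix (Fin m) (Fin n) ℝ} {δ₂ δ₃ : ℝ}
    (h2 : RIC A (2 * k) δ₂) (h3 : RIC A (3 * k) δ₃) {v h : Fin n → ℝ} {η : Fin m → ℝ}
    {S V Ω : Finset (Fin n)} (hSV : S ⊆ V) (hS : S.card ≤ k) (hV : V.card ≤ 2 * k)
    (hv : ∀ i ∉ V, v i = 0) (hh : IsHT q (Aᵀ.mulVec (A.mulVec v + η)) h Ω) :
    nrm (restr (v - h) S) ≤ 2 * (δ₃ * nrm v + Real.sqrt (1 + δ₂) * nrm η) := by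
  set r := Aᵀ.mulVec (A.mulVec v + η) with hr
  obtain ⟨W, hWV, hWc, hWr⟩ := ht_dominates hh (hV.trans hq) hSV
  have b1 := grad_bound h3 h2 (η := η) (W := S) hv
    (by rw [Finset.union_eq_right.2 hSV]; omega) (by omega)
  have b2 := grad_bound h3 h2 (η := η) (W := W) hv
    ((Finset.card_union_le _ _).trans (by omega)) (by omega)
  rw [← hr] at b1 b2
  have e1 : restr (r - v) W = restr r W := by
    funext i
    by_cases hi : i ∈ W
    · simp [restr, hi, hv i (Finset.disjoint_left.1 hWV hi)]
    · simp [restr, hi]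
  have e2 : restr (v - h) S = restr r (S \ Ω) - restr (r - v) S := by
    funext i
    by_cases hi : i ∈ S
    · by_cases hi' : i ∈ Ω
      · simp [restr, hi, hi', hh.2.1 i hi']
      · simp [restr, hi, hi', hh.2.2.1 i hi']
    · simp [restr, hi]
  rw [e1] at b2
  rw [e2]
  linarith [nrm_sub_le (restr r (S \ Ω)) (restr (r - v) S)]

/-- A `{0,1}`-valued weight of total mass `k` is the indicator of a `k`-set. -/
lemma weight_eq {n k : ℕ} {w : Fin n → ℝ} (h01 : ∀ i, w i = 0 ∨ w i = 1)
    (hs : ∑ i, w i = (k : ℝ)) : (suppF w).card = k := by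
  have : ∑ i, w i = ∑ i, if i ∈ suppF w then (1 : ℝ) else 0 := by
    refine Finset.sum_congr rfl fun i _ => ?_
    rcases h01 i with h | h <;> simp [suppF, h]
  rw [this, Finset.sum_ite_mem] at hs
  simpa using hs

/-- One iteration, with the sharper constant `2`. -/
lemma pgot_step {m n k q : ℕ} (hq : 2 * k ≤ q) {A : Matrix (Fin m) (Fin n) ℝ} {y η : Fin m → ℝ}
    {xs : Fin n → ℝ} (hxs : sparse k xs) (hη : η = y - A.mulVec xs) {δ₁ δ₂ δ₃ : ℝ}
    (h1 : RIC A k δ₁) (h2 : RIC A (2 * k) δ₂) (h3 : RIC A (3 * k) δ₃)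
    {x : ℕ → Fin n → ℝ} (hx : IsPGOTSeq A y k q x) (p : ℕ) :
    Real.sqrt (1 - δ₂) * nrm (x (p + 1) - xs) ≤ Real.sqrt (1 + δ₁) *
      (2 * (δ₃ * nrm (x p - xs) + Real.sqrt (1 + δ₂) * nrm η)) + 2 * nrm η := by
  have hsp : ∀ p, sparse k (x p) := by
    intro p
    cases p with
    | zero => exact sparse_of_subset (W := ∅) (fun i _ => by simp [hx.1]) (by simp)
    | succ p =>
      obtain ⟨h, Ω, w, -, hw, hws, -, he⟩ := hx.2 p
      exact sparse_of_subset (W := suppF w) (fun i hi => by simp [he, notMem_suppF hi])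
        (weight_eq hw hws).le
  obtain ⟨h, Ω, w, hH, hw, hws, hopt, he⟩ := hx.2 p
  have hkn : k ≤ Fintype.card (Fin n) := (weight_eq hw hws) ▸ Finset.card_le_univ _
  obtain ⟨S, hSx, hSc⟩ := Finset.exists_superset_card_eq (s := suppF xs) hxs hkn
  set v := xs - x p with hvd
  have hres : y - A.mulVec (x p) = A.mulVec v + η := by
    rw [hη, hvd, mulVec_sub]; abel
  rw [hres] at hH
  have hv : ∀ i ∉ S ∪ suppF (x p), v i = 0 := fun i hi => by
    rw [Finset.mem_union, not_or] at hi
    simp [hvd, notMem_suppF hi.2, notMem_suppF fun hh => hi.1 (hSx hh)]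
  have hVc : (S ∪ suppF (x p)).card ≤ 2 * k := by
    have := Finset.card_union_le S (suppF (x p))
    have : (suppF (x p)).card ≤ k := hsp p
    omega
  have b1 := thresh_bound hq h2 h3 Finset.subset_union_left hSc.le hVc hv hH
  -- Compare the optimal weight with the indicator of `S`.
  have ho := hopt (fun i => if i ∈ S then 1 else 0)
    (fun i => by by_cases hi : i ∈ S <;> simp [hi]) (by simp [hSc])
  rw [← he] at ho
  have ho' := abs_le_of_sq_le_sq' ho (nrm_nonneg _) |>.2
  have e1 : y - A.mulVec (fun i => (x p i + h i) * if i ∈ S then (1 : ℝ) else 0)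
      = A.mulVec (restr (v - h) S) + η := by
    have : (fun i => (x p i + h i) * if i ∈ S then (1 : ℝ) else 0) = xs - restr (v - h) S := by
      funext i
      by_cases hi : i ∈ S
      · simp only [restr, hi, hvd, Pi.sub_apply, if_true]
        ring
      · simp [restr, hi, notMem_suppF fun hh => hi (hSx hh)]
    rw [this, hη, mulVec_sub]; abel
  rw [e1] at ho'
  have b2 : nrm (A.mulVec (restr (v - h) S)) ≤ Real.sqrt (1 + δ₁) * nrm (restr (v - h) S) := by
    have := (h1.2.2 (restr (v - h) S)
      (sparse_of_subset (W := S) (fun i hi => by simp [restr, hi]) hSc.le)).2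
    have h0 := h1.1
    refine abs_le_of_sq_le_sq' ?_ (mul_nonneg (Real.sqrt_nonneg _) (nrm_nonneg _)) |>.2
    rw [mul_pow, Real.sq_sqrt (by linarith)]
    exact this
  have b3 : Real.sqrt (1 - δ₂) * nrm (x (p + 1) - xs) ≤ nrm (A.mulVec (x (p + 1) - xs)) := by
    have hc : (suppF (x (p + 1)) ∪ suppF xs).card ≤ 2 * k := by
      have := Finset.card_union_le (suppF (x (p + 1))) (suppF xs)
      have : (suppF (x (p + 1))).card ≤ k := hsp (p + 1)
      have : (suppF xs).card ≤ k := hxs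
      omega
    have := (h2.2.2 (x (p + 1) - xs) (sparse_of_subset (fun i hi => by
      rw [Finset.mem_union, not_or] at hi
      simp [notMem_suppF hi.1, notMem_suppF hi.2]) hc)).1
    have h0 := h2.2.1
    refine abs_le_of_sq_le_sq' ?_ (nrm_nonneg _) |>.2
    rw [mul_pow, Real.sq_sqrt (by linarith)]
    exact this
  have e2 : A.mulVec (x (p + 1) - xs) = η - (y - A.mulVec (x (p + 1))) := by
    rw [hη, mulVec_sub]; abel
  have b4 := nrm_sub_le η (y - A.mulVec (x (p + 1)))
  rw [← e2] at b4
  have b5 := nrm_add_le (A.mulVec (restr (v - h) S)) η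
  have b6 := mul_le_mul_of_nonneg_left b1 (Real.sqrt_nonneg (1 + δ₁))
  rw [nrm_sub_comm (x p) xs]
  linarith

/-- The hypothesis on `δ` says that `δ` lies below the positive root of `φ δ² + (φ + 1) δ = 1`. -/
lemma rho_aux {φ δ : ℝ} (hφ : 0 ≤ φ) (h0 : 0 ≤ δ)
    (hδ : δ < 2 / (Real.sqrt (φ ^ 2 + 6 * φ + 1) + φ + 1)) : φ * δ * (1 + δ) < 1 - δ := by
  set R := Real.sqrt (φ ^ 2 + 6 * φ + 1) with hR
  have hR0 : 0 ≤ R := Real.sqrt_nonneg _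
  have hR2 : R ^ 2 = φ ^ 2 + 6 * φ + 1 := Real.sq_sqrt (by positivity)
  rw [lt_div_iff₀ (by positivity)] at hδ
  set D := R + φ + 1 with hD
  have hDp : 0 < D := by positivity
  -- `D` is the larger root of `D² = 2 (φ + 1) D + 4 φ`.
  have hDq : D ^ 2 = 2 * (φ + 1) * D + 4 * φ := by rw [hD]; nlinarith
  have hs : 0 ≤ δ * D := by positivity
  have k1 : φ * (δ * D) ^ 2 ≤ φ * 4 := mul_le_mul_of_nonneg_left (by nlinarith) hφ
  have k2 : (φ + 1) * D * (δ * D) < (φ + 1) * D * 2 := mul_lt_mul_of_pos_left hδ (by positivity)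
  have : (φ * δ ^ 2 + (φ + 1) * δ) * D ^ 2 < 1 * D ^ 2 := by nlinarith
  have := lt_of_mul_lt_mul_right this (sq_nonneg D)
  nlinarith

theorem stmt5 {m n : ℕ} (k q : ℕ) (hk : 0 < k) (hq : 2 * k ≤ q)
    (A : Matrix (Fin m) (Fin n) ℝ) (y : Fin m → ℝ)
    (xs : Fin n → ℝ) (hxs : sparse k xs) (η : Fin m → ℝ) (hη : η = y - A.mulVec xs)
    (t : ℕ) (ht : t = ⌈(q : ℝ) / (k : ℝ)⌉₊)
    (φ : ℝ) (hφ : φ = (Real.sqrt 5 + 1) / 2 * ((t : ℝ) + 1))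
    (δ₁ δ₂ δ₃ : ℝ) (h1 : RIC A k δ₁) (h2 : RIC A (2 * k) δ₂) (h3 : RIC A (3 * k) δ₃)
    (h12 : δ₁ ≤ δ₂) (h23 : δ₂ ≤ δ₃)
    (hδ : δ₃ < 2 / (Real.sqrt (φ ^ 2 + 6 * φ + 1) + φ + 1))
    (x : ℕ → Fin n → ℝ) (hx : IsPGOTSeq A y k q x)
    (ρ τ : ℝ)
    (hρ : ρ = (Real.sqrt 5 + 1) / 2 * ((t : ℝ) + 1) * δ₃ *
      Real.sqrt ((1 + δ₁) / (1 - δ₂)))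
    (hτ : τ = ((Real.sqrt 5 + 1) * ((t : ℝ) + 1) * (1 + δ₂) + 4) /
      (2 * Real.sqrt (1 - δ₂))) :
    ρ < 1 ∧ ∀ p : ℕ,
      nrm (x (p + 1) - xs) ≤ ρ ^ p * nrm (x 0 - xs) + τ / (1 - ρ) * nrm η := by
  have hφ2 : 2 ≤ φ := by
    have ht2 : (2 : ℝ) ≤ t := by
      have hc : (q : ℝ) / k ≤ t := ht ▸ Nat.le_ceil _
      have hk' : (0 : ℝ) < k := by exact_mod_cast hk
      have hq' : (2 : ℝ) * k ≤ q := by exact_mod_cast hq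
      exact ((le_div_iff₀ hk').2 hq').trans hc
    have : (2 : ℝ) ≤ Real.sqrt 5 := Real.le_sqrt_of_sq_le (by norm_num)
    rw [hφ]; nlinarith
  have d1 := h1.1
  have d2 := h2.1
  have d2' := h2.2.1
  have d3 := h3.1
  have d3' := h3.2.1
  set a := Real.sqrt (1 + δ₁) with ha
  set b := Real.sqrt (1 + δ₂) with hb
  set c := Real.sqrt (1 - δ₂) with hc
  have ha0 : 0 ≤ a := Real.sqrt_nonneg _
  have hb0 : 0 ≤ b := Real.sqrt_nonneg _
  have hcp : 0 < c := Real.sqrt_pos.2 (by linarith)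
  have hab : a ≤ b := Real.sqrt_le_sqrt (by linarith)
  have hb2 : b ^ 2 = 1 + δ₂ := Real.sq_sqrt (by linarith)
  have hρ' : ρ = φ * δ₃ * a / c := by
    rw [hρ, ← hφ, Real.sqrt_div (by linarith)]; ring
  have hτ' : τ = (φ * (1 + δ₂) + 2) / c := by
    rw [hτ, hφ]; field_simp; ring
  have hρ0 : 0 ≤ ρ := by rw [hρ']; positivity
  have hρ1 : ρ < 1 := by
    have key := rho_aux (by linarith) d3 hδ
    have hs : Real.sqrt ((1 + δ₁) / (1 - δ₂)) ≤ (1 + δ₃) / (1 - δ₃) := by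
      have h1' : (1 + δ₁) / (1 - δ₂) ≤ (1 + δ₃) / (1 - δ₃) :=
        div_le_div₀ (by linarith) (by linarith) (by linarith) (by linarith)
      have h2' : 1 ≤ (1 + δ₃) / (1 - δ₃) := (one_le_div (by linarith)).2 (by linarith)
      exact Real.sqrt_le_iff.2 ⟨by linarith, by nlinarith⟩
    rw [hρ, ← hφ]
    refine (mul_le_mul_of_nonneg_left hs (by positivity)).trans_lt ?_
    rw [← mul_div_assoc, div_lt_one (by linarith)]
    exact key
  have hstep : ∀ p, nrm (x (p + 1) - xs) ≤ ρ * nrm (x p - xs) + τ * nrm η := by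
    intro p
    have hs := pgot_step hq hxs hη h1 h2 h3 hx p
    rw [← ha, ← hb, ← hc] at hs
    have he := nrm_nonneg (x p - xs)
    have hn := nrm_nonneg η
    have k1 : 2 * (a * δ₃ * nrm (x p - xs)) ≤ φ * (a * δ₃ * nrm (x p - xs)) :=
      mul_le_mul_of_nonneg_right hφ2 (by positivity)
    have k2 : 2 * (a * b * nrm η) ≤ φ * (b * b * nrm η) :=
      mul_le_mul hφ2 (by gcongr) (by positivity) (by linarith)
    have e : ρ * nrm (x p - xs) + τ * nrm η =
        (φ * (a * δ₃ * nrm (x p - xs)) + (φ * (b * b * nrm η) + 2 * nrm η)) / c := by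
      rw [hρ', hτ', ← hb2]; ring
    rw [e, le_div_iff₀ hcp]
    linarith
  refine ⟨hρ1, fun p => ?_⟩
  have hτ0 : 0 ≤ τ := by rw [hτ']; positivity
  set E := τ / (1 - ρ) * nrm η with hE
  have hEfix : ρ * E + τ * nrm η = E := by
    have : 1 - ρ ≠ 0 := by linarith
    rw [hE]; field_simp; ring
  have hall : ∀ p, nrm (x p - xs) ≤ ρ ^ p * nrm (x 0 - xs) + E := by
    intro p
    induction p with
    | zero =>
      have : 0 ≤ E := mul_nonneg (div_nonneg hτ0 (by linarith)) (nrm_nonneg _)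
      simpa using this
    | succ p ih =>
      have := mul_le_mul_of_nonneg_left ih hρ0
      rw [pow_succ]
      linarith [hstep p]
  have hpow : ρ ^ (p + 1) ≤ ρ ^ p := pow_le_pow_of_le_one hρ0 hρ1.le (Nat.le_succ p)
  linarith [hall (p + 1), mul_le_mul_of_nonneg_right hpow (nrm_nonneg (x 0 - xs))]
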